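/- arXiv:1311.0502 — 7 statements merged into one kernel-verified Lean document; each statement's English description precedes it below -/
import Mathlib

section
/- Let α be a join-semilattice with a least element ⊥ which is Noetherian, i.e. every nonempty totally ordered subset of α that is bounded above has a greatest element. Then for every family (x_i)_{i∈I} of elements of α that admits an upper bound, there exists a finite subset J ⊆ I such that x_i ≤ ⋁_{j∈J} x_j for all i ∈ I; in particular the family has a least upper bound, equal to this finite join. -/
/-- A span (join-semilattice with ⊥) is Noetherian if every nonempty totally ordered
subset that is bounded above has a greatest element. Then any family of elements
admitting an upper bound has a least upper bound, achieved as a finite join. -/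
theorem stmt0 {α : Type*} [SemilatticeSup α] [OrderBot α]
    (hNoeth : ∀ S : Set α, S.Nonempty → IsChain (· ≤ ·) S → BddAbove S →
      ∃ m ∈ S, ∀ y ∈ S, y ≤ m)
    {I : Type*} (x : I → α) (hbdd : BddAbove (Set.range x)) :
    ∃ J : Finset I, (∀ i : I, x i ≤ J.sup x) ∧ IsLUB (Set.range x) (J.sup x) := by
  classical
  obtain ⟨b, hb⟩ := hbdd
  have hJb : ∀ (c : α), c ∈ upperBounds (Set.range x) → ∀ J : Finset I, J.sup x ≤ c :=
    fun c hc J => Finset.sup_le fun i _ => hc ⟨i, rfl⟩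
  obtain ⟨m, -, hm⟩ := zorn_le_nonempty₀ (Set.range fun J : Finset I => J.sup x)
    (by
      intro c hc hch y hy
      obtain ⟨m, hm, hmax⟩ := hNoeth c ⟨y, hy⟩ hch ⟨b, by
        intro z hz
        obtain ⟨J, rfl⟩ := hc hz
        exact hJb b hb J⟩
      exact ⟨m, hc hm, hmax⟩) _ ⟨∅, rfl⟩
  obtain ⟨⟨J, rfl⟩, hmax⟩ := hm
  have key : ∀ i : I, x i ≤ J.sup x := by
    intro i
    have h1 : (insert i J).sup x ≤ J.sup x :=
      hmax ⟨insert i J, rfl⟩ (Finset.sup_mono (Finset.subset_insert i J))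
    exact (Finset.le_sup (f := x) (Finset.mem_insert_self i J)).trans h1
  refine ⟨J, key, ?_, fun c hc => hJb c hc J⟩
  rintro _ ⟨i, rfl⟩
  exact key i
end

section
/- Let α be a join-semilattice with a least element ⊥ and a greatest element ⊤. The following are equivalent: (1) α is Noetherian, i.e. every nonempty totally ordered subset of α has a greatest element; (2) every subset S of α has a least upper bound in α, and this least upper bound equals the join of some finite subset of S (so α is a complete lattice in which every element is finite/compact). -/
/-- For a bounded span (join-semilattice with ⊥ and ⊤): Noetherian (every nonempty
chain has a greatest element) iff every subset has a least upper bound which is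
the join of a finite subset of it. -/
theorem stmt1 {α : Type*} [SemilatticeSup α] [OrderBot α] [OrderTop α] :
    (∀ S : Set α, S.Nonempty → IsChain (· ≤ ·) S → ∃ m ∈ S, ∀ y ∈ S, y ≤ m) ↔
    (∀ S : Set α, ∃ a : α, IsLUB S a ∧ ∃ J : Finset α, ↑J ⊆ S ∧ a = J.sup id) := by
  classical
  constructor
  · intro h S
    obtain ⟨m, -, hm⟩ := zorn_le_nonempty₀ {a : α | ∃ J : Finset α, ↑J ⊆ S ∧ a = J.sup id}
      (fun c hc hch y hy => by
        obtain ⟨m, hm, hm2⟩ := h c ⟨y, hy⟩ hch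
        exact ⟨m, hc hm, hm2⟩) ⊥ ⟨∅, by simp, by simp⟩
    obtain ⟨J, hJ, rfl⟩ := hm.prop
    refine ⟨J.sup id, ⟨?_, ?_⟩, J, hJ, rfl⟩
    · intro x hx
      have h1 : (insert x J).sup id = x ⊔ J.sup id := by simp [Finset.sup_insert]
      have h2 : x ⊔ J.sup id ≤ J.sup id := by
        refine hm.le_of_ge ⟨insert x J, ?_, h1.symm⟩ le_sup_right
        rw [Finset.coe_insert]
        exact Set.insert_subset hx hJ
      exact le_sup_left.trans h2
    · intro b hb
      exact Finset.sup_le fun x hx => hb (hJ hx)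
  · intro h S hne hS
    obtain ⟨a, ha, J, hJ, rfl⟩ := h S
    have key : ∀ K : Finset α, ↑K ⊆ S → ∃ m ∈ S, K.sup id ≤ m := by
      intro K
      induction K using Finset.induction_on with
      | empty =>
        intro _
        obtain ⟨s, hs⟩ := hne
        exact ⟨s, hs, by simp⟩
      | insert x K _ ih =>
        intro hK
        rw [Finset.coe_insert, Set.insert_subset_iff] at hK
        obtain ⟨m, hm, hle⟩ := ih hK.2
        rw [Finset.sup_insert]
        rcases hS.total hK.1 hm with h1 | h1
        · exact ⟨m, hm, sup_le h1 hle⟩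
        · exact ⟨x, hK.1, sup_le le_rfl (hle.trans h1)⟩
    obtain ⟨m, hm, hle⟩ := key J hJ
    exact ⟨m, hm, fun y hy => (ha.1 hy).trans hle⟩
end

section
/- Let A be an additive commutative group, α a join-semilattice with least element ⊥, and ν : A → α a function satisfying ν 0 = ⊥, ν(−x) = ν x for all x, and the ultrametric inequality ν(x + y) ≤ ν x ⊔ ν y for all x, y. Then for every finite subset s = {x₁, …, xₙ} of A, the finite join ν x₁ ⊔ ⋯ ⊔ ν xₙ is the least upper bound of the image of ν over the subgroup of A generated by s: IsLUB (ν '' (closure of s as additive subgroup)) (⨆_{x∈s} ν x). -/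
/-- For a non-Archimedean seminorm `ν` on an abelian group with values in a
join-semilattice with ⊥, the finite join of `ν` over a finite set `s` is the least
upper bound of `ν` on the subgroup generated by `s`. -/
theorem stmt9 {A : Type*} [AddCommGroup A] {α : Type*} [SemilatticeSup α] [OrderBot α]
    (ν : A → α) (h0 : ν 0 = ⊥) (hneg : ∀ x : A, ν (-x) = ν x)
    (hadd : ∀ x y : A, ν (x + y) ≤ ν x ⊔ ν y) (s : Finset A) :
    IsLUB (ν '' (AddSubgroup.closure (s : Set A) : Set A)) (s.sup ν) := by
  constructor
  · rintro _ ⟨x, hx, rfl⟩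
    rw [SetLike.mem_coe] at hx
    induction hx using AddSubgroup.closure_induction with
    | mem x h => exact Finset.le_sup (f := ν) (Finset.mem_coe.mp h)
    | zero => rw [h0]; exact bot_le
    | add x y hx hy ihx ihy => exact (hadd x y).trans (sup_le ihx ihy)
    | neg x hx ih => rw [hneg]; exact ih
  · intro b hb
    exact Finset.sup_le fun x hx =>
      hb ⟨x, AddSubgroup.subset_closure (Finset.mem_coe.mpr hx), rfl⟩
end

section
/- Let α be a commutative idempotent semiring (a commutative semiring with a + a = a for all a, canonically partially ordered by a ≤ b ↔ a + b = b) which is contracting, i.e. a ≤ 1 for all a ∈ α. Then the map f ↦ f⁻¹({false}) is a bijection from the set of functions f : α → Bool satisfying f 0 = false, f 1 = true, f (a + b) = f a || f b, and f (a · b) = f a && f b, onto the set of subsets I ⊆ α satisfying: 0 ∈ I; 1 ∉ I; a, b ∈ I implies a + b ∈ I; a ≤ b and b ∈ I imply a ∈ I; b ∈ I implies a · b ∈ I for all a; and a · b ∈ I implies a ∈ I or b ∈ I (I is an open prime semiring ideal). -/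
/-- For a contracting commutative idempotent semiring `α` (with canonical order
`a ≤ b ↔ a + b = b`), kernels set up a bijection between semiring homomorphisms
`α → Bool` (the Boolean semifield) and open prime semiring ideals of `α`. -/
theorem stmt12 {α : Type*} [CommSemiring α]
    (hidem : ∀ a : α, a + a = a) (hcontr : ∀ a : α, a + 1 = 1) :
    Set.BijOn (fun f : α → Bool => f ⁻¹' {false})
      {f : α → Bool | f 0 = false ∧ f 1 = true ∧
        (∀ a b : α, f (a + b) = (f a || f b)) ∧
        (∀ a b : α, f (a * b) = (f a && f b))}
      {I : Set α | 0 ∈ I ∧ (1 : α) ∉ I ∧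
        (∀ a ∈ I, ∀ b ∈ I, a + b ∈ I) ∧
        (∀ a b : α, a + b = b → b ∈ I → a ∈ I) ∧
        (∀ a b : α, b ∈ I → a * b ∈ I) ∧
        (∀ a b : α, a * b ∈ I → a ∈ I ∨ b ∈ I)} := by
  classical
  refine ⟨?_, ?_, ?_⟩
  · rintro f ⟨h0, h1, ha, hm⟩
    simp only [Set.mem_setOf_eq, Set.mem_preimage, Set.mem_singleton_iff]
    refine ⟨h0, by simp [h1], ?_, ?_, ?_, ?_⟩
    · intro a h b h'
      simp [ha, h, h']
    · intro a b hab hb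
      have := ha a b
      rw [hab, hb] at this
      simpa using this.symm
    · intro a b hb
      simp [hm, hb]
    · intro a b h
      rw [hm] at h
      exact (Bool.and_eq_false_iff).mp h
  · intro f _ g _ h
    funext a
    have h2 : f a = false ↔ g a = false := by
      have := Set.ext_iff.mp h a
      simpa using this
    cases hf : f a <;> cases hg : g a <;> simp_all
  · rintro I ⟨h0, h1, ha, hle, hm, hp⟩
    refine ⟨fun a => decide (a ∉ I), ⟨by simp [h0], by simp [h1], ?_, ?_⟩, ?_⟩
    · intro a b
      have e : a + b ∈ I ↔ a ∈ I ∧ b ∈ I :=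
        ⟨fun h => ⟨hle a (a + b) (by rw [← add_assoc, hidem]) h,
          hle b (a + b) (by rw [add_left_comm, hidem]) h⟩, fun h => ha a h.1 b h.2⟩
      by_cases h : a ∈ I <;> by_cases h' : b ∈ I <;> simp [e, h, h']
    · intro a b
      have e : a * b ∈ I ↔ a ∈ I ∨ b ∈ I :=
        ⟨hp a b, fun h => h.elim (fun h => mul_comm b a ▸ hm b a h) (hm a b)⟩
      by_cases h : a ∈ I <;> by_cases h' : b ∈ I <;> simp [e, h, h']
    · ext a
      simp
end

section
/- Let α be a commutative idempotent semiring (a commutative semiring with a + a = a, canonically partially ordered by a ≤ b ↔ a + b = b), let S₁, …, S_k ∈ α satisfy Sᵢ ≤ 1 for each i, and put S = S₁ + ⋯ + S_k (the join of the Sᵢ). Then for all a, b ∈ α: there exists n with a·Sⁿ ≤ b and b·Sⁿ ≤ a, if and only if for every i ∈ {1,…,k} there exists nᵢ with a·Sᵢ^{nᵢ} ≤ b and b·Sᵢ^{nᵢ} ≤ a. -/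
theorem aux_add {α : Type*} [IdemCommSemiring α] {x y : α} (hx : x ≤ 1) (hy : y ≤ 1)
    (n m : ℕ) : (x + y) ^ (n + m) ≤ x ^ n + y ^ m := by
  rw [add_pow]
  refine Finset.sum_induction _ (fun z => z ≤ x ^ n + y ^ m) (fun _ _ => add_le)
    zero_le ?_
  intro i hi
  have hi' : i < n + m + 1 := Finset.mem_range.1 hi
  rw [natCast_eq_one (Nat.choose_pos (by omega)).ne', mul_one]
  rcases le_total n i with h | h
  · calc x ^ i * y ^ (n + m - i) ≤ x ^ n * 1 :=
          mul_le_mul' (pow_le_pow_right_of_le_one' hx h) (pow_le_one' hy _)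
      _ ≤ _ := by rw [mul_one]; exact le_self_add
  · calc x ^ i * y ^ (n + m - i) ≤ 1 * y ^ m :=
          mul_le_mul' (pow_le_one' hx _) (pow_le_pow_right_of_le_one' hy (by omega))
      _ ≤ _ := by rw [one_mul]; exact le_add_self

theorem aux_main {α : Type*} [IdemCommSemiring α]
    {k : ℕ} (S : Fin k → α) (hS : ∀ i, S i ≤ 1) (a b : α) :
    (∃ n : ℕ, a * (∑ i, S i) ^ n ≤ b ∧ b * (∑ i, S i) ^ n ≤ a) ↔
    (∀ i : Fin k, ∃ n : ℕ, a * S i ^ n ≤ b ∧ b * S i ^ n ≤ a) := by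
  constructor
  · rintro ⟨n, h1, h2⟩ i
    have h : S i ^ n ≤ (∑ i, S i) ^ n :=
      pow_le_pow_left' (Finset.single_le_sum_of_canonicallyOrdered (Finset.mem_univ i)) n
    exact ⟨n, (mul_le_mul_right h a).trans h1, (mul_le_mul_right h b).trans h2⟩
  · intro h
    refine (Finset.sum_induction S
      (fun z => z ≤ 1 ∧ ∃ n : ℕ, a * z ^ n ≤ b ∧ b * z ^ n ≤ a) ?_ ?_
      (fun i _ => ⟨hS i, h i⟩)).2
    · rintro x y ⟨hx, n, h1, h2⟩ ⟨hy, m, h3, h4⟩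
      refine ⟨add_le hx hy, n + m, ?_, ?_⟩
      · refine (mul_le_mul_right (aux_add hx hy n m) a).trans ?_
        rw [mul_add]; exact add_le h1 h3
      · refine (mul_le_mul_right (aux_add hx hy n m) b).trans ?_
        rw [mul_add]; exact add_le h2 h4
    · exact ⟨zero_le, 1, by rw [pow_one, mul_zero]; exact zero_le, by rw [pow_one, mul_zero]; exact zero_le⟩

/-- Elementwise form of the cellular cover formula: for contracting elements
`S i ≤ 1` with join `S = ∑ i, S i` in a commutative idempotent semiring (canonical
order `a ≤ b ↔ a + b = b`), two elements are identified in the cellular localisation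
at `S` iff they are identified in every cellular localisation at the `S i`. -/
theorem stmt14 {α : Type*} [CommSemiring α] (hidem : ∀ a : α, a + a = a)
    {k : ℕ} (S : Fin k → α) (hS : ∀ i, S i + 1 = 1) (a b : α) :
    (∃ n : ℕ, a * (∑ i, S i) ^ n + b = b ∧ b * (∑ i, S i) ^ n + a = a) ↔
    (∀ i : Fin k, ∃ n : ℕ, a * S i ^ n + b = b ∧ b * S i ^ n + a = a) := by
  letI : IdemCommSemiring α :=
    { IdemSemiring.ofSemiring hidem, (inferInstance : CommSemiring α) with }
  exact aux_main S hS a b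
end

section
/- Let α be a commutative idempotent semiring (a commutative semiring with a + a = a, canonically partially ordered by a ≤ b ↔ a + b = b) and let S ∈ α satisfy S ≤ 1. Then the smallest ring congruence on α containing the single pair (S, 1) (Mathlib's RingConGen of the relation relating exactly S and 1) relates a and b if and only if there exists n ∈ ℕ with a·Sⁿ ≤ b and b·Sⁿ ≤ a. -/
theorem stmt15_tr {α : Type*} [CommSemiring α] {x y z : α} (h : x + y = y) (k : y + z = z) :
    x + z = z := by
  rw [← k, ← add_assoc, h]

theorem stmt15_ml {α : Type*} [CommSemiring α] {x y : α} (z : α) (h : x + y = y) :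
    x * z + y * z = y * z := by
  rw [← add_mul, h]

theorem stmt15_ad {α : Type*} [CommSemiring α] {x y u v : α} (h : x + y = y) (k : u + v = v) :
    (x + u) + (y + v) = y + v := by
  rw [add_add_add_comm, h, k]

theorem stmt15_pw {α : Type*} [CommSemiring α] (hidem : ∀ a : α, a + a = a)
    (S : α) (hS : S + 1 = 1) (n : ℕ) : S ^ n + 1 = 1 := by
  induction n with
  | zero => simpa using hidem 1
  | succ n ih =>
    have := stmt15_ml S ih
    rw [← pow_succ, one_mul] at this
    exact stmt15_tr this hS

theorem stmt15_up {α : Type*} [CommSemiring α] (hidem : ∀ a : α, a + a = a)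
    (S : α) (hS : S + 1 = 1) {a b : α} {n : ℕ} (m : ℕ) (h : a * S ^ n + b = b) :
    a * S ^ (n + m) + b = b := by
  have h1 := stmt15_ml (a * S ^ n) (stmt15_pw hidem S hS m)
  rw [one_mul] at h1
  have e : a * S ^ (n + m) = S ^ m * (a * S ^ n) := by ring
  rw [e]
  exact stmt15_tr h1 h

theorem stmt15_trn {α : Type*} [CommSemiring α] {S a b c : α} {n m : ℕ}
    (h : a * S ^ n + b = b) (k : b * S ^ m + c = c) : a * S ^ (n + m) + c = c := by
  have h1 := stmt15_ml (S ^ m) h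
  rw [mul_assoc, ← pow_add] at h1
  exact stmt15_tr h1 k

theorem stmt15_mln {α : Type*} [CommSemiring α] {S a b c d : α} {n m : ℕ}
    (h : a * S ^ n + b = b) (k : c * S ^ m + d = d) :
    (a * c) * S ^ (n + m) + b * d = b * d := by
  have h1 := stmt15_ml (c * S ^ m) h
  have h2 := stmt15_ml b k
  have e : (a * c) * S ^ (n + m) = a * S ^ n * (c * S ^ m) := by ring
  rw [e]
  rw [mul_comm _ b, mul_comm d b] at h2
  exact stmt15_tr h1 h2

/-- Concrete description of the cellular localisation of a commutative idempotent
semiring at a contracting element `S` (canonical order `a ≤ b ↔ a + b = b`): the ring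
congruence generated by `S ∼ 1` relates `a` and `b` iff `a·Sⁿ ≤ b` and `b·Sⁿ ≤ a` for
some `n`. -/
theorem stmt15 {α : Type*} [CommSemiring α] (hidem : ∀ a : α, a + a = a)
    (S : α) (hS : S + 1 = 1) (a b : α) :
    ringConGen (fun x y : α => x = S ∧ y = 1) a b ↔
    ∃ n : ℕ, a * S ^ n + b = b ∧ b * S ^ n + a = a := by
  constructor
  · intro h
    change RingConGen.Rel _ a b at h
    induction h with
    | of x y h =>
      obtain ⟨rfl, rfl⟩ := h
      refine ⟨1, ?_, ?_⟩
      · have := stmt15_pw hidem x hS 2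
        rwa [pow_one, ← pow_two]
      · simpa using hidem x
    | refl x => exact ⟨0, by simpa using hidem x, by simpa using hidem x⟩
    | symm _ ih =>
      obtain ⟨n, h, k⟩ := ih
      exact ⟨n, k, h⟩
    | trans _ _ ih1 ih2 =>
      obtain ⟨n, h, k⟩ := ih1
      obtain ⟨m, h', k'⟩ := ih2
      exact ⟨n + m, stmt15_trn h h', by rw [add_comm n m]; exact stmt15_trn k' k⟩
    | add _ _ ih1 ih2 =>
      obtain ⟨n, h, k⟩ := ih1
      obtain ⟨m, h', k'⟩ := ih2
      have u := stmt15_up hidem S hS m h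
      have v := stmt15_up hidem S hS m k
      have u' := stmt15_up hidem S hS n h'
      have v' := stmt15_up hidem S hS n k'
      rw [add_comm m n] at u' v'
      refine ⟨n + m, ?_, ?_⟩
      · rw [add_mul]; exact stmt15_ad u u'
      · rw [add_mul]; exact stmt15_ad v v'
    | mul _ _ ih1 ih2 =>
      obtain ⟨n, h, k⟩ := ih1
      obtain ⟨m, h', k'⟩ := ih2
      exact ⟨n + m, stmt15_mln h h', stmt15_mln k k'⟩
  · rintro ⟨n, h, k⟩
    set c := ringConGen (fun x y : α => x = S ∧ y = 1) with hc
    have hS1 : c S 1 := RingConGen.Rel.of _ _ ⟨rfl, rfl⟩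
    have hSn : c (S ^ n) 1 := by simpa using c.pow n hS1
    have key : ∀ x y : α, x * S ^ n + y = y → c (x + y) y := by
      intro x y hxy
      have h1 : c (x * S ^ n + y) (x * 1 + y) := c.add (c.mul (c.refl x) hSn) (c.refl y)
      rw [hxy, mul_one] at h1
      exact c.symm h1
    have h1 := key a b h
    have h2 := key b a k
    rw [add_comm] at h2
    exact c.trans (c.symm h2) h1
end

section
/- Let A be a commutative ring and β a commutative idempotent semiring (a commutative semiring with b + b = b, canonically partially ordered by b ≤ c ↔ b + c = c). Let w : A → β satisfy: w 0 = 0, w 1 = 1, w(a·b) = w a · w b for all a, b, w(a + b) ≤ w a + w b for all a, b (the ultrametric inequality, since + in β is join), and w a ≤ 1 for all a (w is integral/contracting). Then there exists a unique function W from the set of finitely generated ideals of A to β such that W(span{a}) = w a for every a ∈ A, W(I ⊔ J) = W I + W J for all finitely generated ideals I, J, and W(I·J) = W I · W J for all finitely generated ideals I, J. -/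
/-- Universal property of the free semiring `B^c A` of finitely generated ideals of a
commutative ring `A`: every contracting (integral) semivaluation `w : A → β` into a
commutative idempotent semiring `β` (canonical order `b ≤ c ↔ b + c = c`) factors
uniquely through the map `a ↦ (a)` from `A` to finitely generated ideals, via a map
turning ideal sums into semiring sums (joins) and ideal products into products. -/
theorem stmt18 {A : Type*} [CommRing A] {β : Type*} [CommSemiring β]
    (hidem : ∀ b : β, b + b = b)
    (w : A → β) (h0 : w 0 = 0) (h1 : w 1 = 1)
    (hmul : ∀ a b : A, w (a * b) = w a * w b)
    (hadd : ∀ a b : A, w (a + b) + (w a + w b) = w a + w b)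
    (hcontr : ∀ a : A, w a + 1 = 1) :
    ∃! W : {I : Ideal A // I.FG} → β,
      (∀ a : A, W ⟨Ideal.span {a}, Submodule.fg_span_singleton a⟩ = w a) ∧
      (∀ I J : {I : Ideal A // I.FG}, W ⟨I.1 ⊔ J.1, Submodule.FG.sup I.2 J.2⟩ = W I + W J) ∧
      (∀ I J : {I : Ideal A // I.FG}, W ⟨I.1 * J.1, Submodule.FG.mul I.2 J.2⟩ = W I * W J) := by
  classical
  let U : Ideal A → β → Prop := fun I b =>
    (∀ x ∈ I, w x + b = b) ∧ ∀ d c : β, (∀ x ∈ I, w x * d + c = c) → b * d + c = c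
  have hU1 : ∀ a, U (Ideal.span {a}) (w a) := by
    intro a
    refine ⟨?_, fun d c h => h a (Ideal.mem_span_singleton_self a)⟩
    intro x hx
    obtain ⟨r, rfl⟩ := Ideal.mem_span_singleton'.1 hx
    rw [hmul]
    calc w r * w a + w a = (w r + 1) * w a := by ring
      _ = w a := by rw [hcontr, one_mul]
  have hU2 : ∀ I J b b', U I b → U J b' → U (I ⊔ J) (b + b') := by
    rintro I J b b' ⟨h, k⟩ ⟨h', k'⟩
    refine ⟨?_, ?_⟩
    · intro x hx
      obtain ⟨y, hy, z, hz, rfl⟩ := Submodule.mem_sup.1 hx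
      calc w (y + z) + (b + b') = w (y + z) + ((w y + b) + (w z + b')) := by
            rw [h y hy, h' z hz]
        _ = (w (y + z) + (w y + w z)) + (b + b') := by ring
        _ = (w y + b) + (w z + b') := by rw [hadd]; ring
        _ = b + b' := by rw [h y hy, h' z hz]
    · intro d c hc
      rw [add_mul, add_assoc, k' d c (fun x hx => hc x (Ideal.mem_sup_right hx)),
        k d c (fun x hx => hc x (Ideal.mem_sup_left hx))]
  have hU3 : ∀ I J b b', U I b → U J b' → U (I * J) (b * b') := by
    rintro I J b b' ⟨h, k⟩ ⟨h', k'⟩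
    refine ⟨?_, ?_⟩
    · intro x hx
      refine Submodule.mul_induction_on hx ?_ ?_
      · intro m hm n hn
        have e : b * b' = w m * w n + (w m * b' + b * w n + b * b') := by
          calc b * b' = (w m + b) * (w n + b') := by rw [h m hm, h' n hn]
            _ = _ := by ring
        rw [hmul, e, ← add_assoc, hidem]
      · intro x y hx hy
        calc w (x + y) + b * b' = w (x + y) + (w x + (w y + b * b')) := by rw [hy, hx]
          _ = (w (x + y) + (w x + w y)) + b * b' := by ring
          _ = w x + (w y + b * b') := by rw [hadd]; ring
          _ = b * b' := by rw [hy, hx]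
    · intro d c hc
      rw [mul_assoc]
      refine k _ _ fun x hx => ?_
      rw [mul_left_comm]
      refine k' _ _ fun y hy => ?_
      rw [← mul_assoc, mul_comm (w y), ← hmul]
      exact hc _ (Ideal.mul_mem_mul hx hy)
  have hUu : ∀ I b b', U I b → U I b' → b = b' := by
    rintro I b b' ⟨h, k⟩ ⟨h', k'⟩
    have e1 := k 1 b' (by simpa using h')
    have e2 := k' 1 b (by simpa using h)
    rw [mul_one] at e1 e2
    rw [← e1, add_comm, e2]
  have hex : ∀ I : {I : Ideal A // I.FG}, ∃ b, U I.1 b := by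
    rintro ⟨I, hI⟩
    refine Submodule.fg_induction (motive := fun I _ => ∃ b, U I b) (fun a => ⟨_, hU1 a⟩) ?_ I hI
    rintro I J - - ⟨b, hb⟩ ⟨b', hb'⟩
    exact ⟨_, hU2 _ _ _ _ hb hb'⟩
  choose W hW using hex
  refine ⟨W, ⟨fun a => hUu _ _ _ (hW _) (hU1 a),
    fun I J => hUu _ _ _ (hW _) (hU2 _ _ _ _ (hW I) (hW J)),
    fun I J => hUu _ _ _ (hW _) (hU3 _ _ _ _ (hW I) (hW J))⟩, ?_⟩
  rintro V ⟨v1, v2, -⟩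
  have key : ∀ I : {I : Ideal A // I.FG}, U I.1 (V I) := by
    rintro ⟨I, hI⟩
    obtain ⟨hI', h⟩ : ∃ h : I.FG, U I (V ⟨I, h⟩) := by
      refine Submodule.fg_induction (motive := fun I _ => ∃ h : I.FG, U I (V ⟨I, h⟩)) ?_ ?_ I hI
      · intro a
        refine ⟨Submodule.fg_span_singleton a, ?_⟩
        have := hU1 a
        rw [← v1 a] at this
        exact this
      · rintro I J - - ⟨hI, h⟩ ⟨hJ, h'⟩
        refine ⟨hI.sup hJ, ?_⟩
        have := hU2 _ _ _ _ h h'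
        rw [← v2 ⟨I, hI⟩ ⟨J, hJ⟩] at this
        exact this
    exact h
  funext I
  exact hUu _ _ _ (key I) (hW I)
end
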